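/- Let (P, C, ψ, e, ψ^C) be entwining data, M = P^{coC}_e, and Φ : C → P convolution invertible with Φ(e) = 1 and ψ∘(id_C ⊗ Φ) = (Φ ⊗ id_C)∘ψ^C. Define ρ(c ⊗ u) = Φ(c₍₁₎) u_α Φ⁻¹(c₍₂₎^α) and σ(b ⊗ c) = Φ(b₍₁₎) Φ(c_A) Φ⁻¹(b₍₂₎^A). Then (ρ, σ) satisfy conditions (i)–(iv) of crossed product data, and the resulting crossed product M ×_Φ C with product (x ⊗ b)(y ⊗ c) = x Φ(b₍₁₎) y_α Φ(c_A) Φ⁻¹(b₍₂₎^{αA}₍₁₎) ⊗ b₍₂₎^{αA}₍₂₎ is an associative algebra isomorphic to P via Θ(x ⊗ c) = x Φ(c), with inverse Θ⁻¹(u) = u_α Φ⁻¹(e^α₍₁₎) ⊗ e^α₍₂₎. -/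

import Mathlib

open TensorProduct LinearMap

noncomputable section

namespace Entwine

variable (k : Type) [Field k] (P : Type) [Ring P] [Algebra k P]
  (C : Type) [AddCommGroup C] [Module k C] [Coalgebra k C]

/-- coproduct of `C` -/
abbrev Δ : C →ₗ[k] C ⊗[k] C := Coalgebra.comul
/-- counit of `C` -/
abbrev ε : C →ₗ[k] k := Coalgebra.counit
/-- multiplication of `P` -/
abbrev μ : P ⊗[k] P →ₗ[k] P := LinearMap.mul' k P

variable (ψ : C ⊗[k] P →ₗ[k] P ⊗[k] C)

/-- entwining axiom `ψ∘(id⊗μ) = (μ⊗id)∘ψ₂₃∘ψ₁₂` -/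
def AxMul : Prop :=
  ψ ∘ₗ map LinearMap.id (μ k P) =
    map (μ k P) LinearMap.id
      ∘ₗ (TensorProduct.assoc k P P C).symm.toLinearMap
      ∘ₗ map LinearMap.id ψ
      ∘ₗ (TensorProduct.assoc k P C P).toLinearMap
      ∘ₗ map ψ LinearMap.id
      ∘ₗ (TensorProduct.assoc k C P P).symm.toLinearMap

/-- entwining axiom `ψ(c ⊗ 1) = 1 ⊗ c` -/
def AxOne : Prop := ∀ c : C, ψ (c ⊗ₜ (1 : P)) = (1 : P) ⊗ₜ c

/-- entwining axiom `(id⊗Δ)∘ψ = ψ₁₂∘ψ₂₃∘(Δ⊗id)` -/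
def AxComul : Prop :=
  map LinearMap.id (Δ k C) ∘ₗ ψ =
    (TensorProduct.assoc k P C C).toLinearMap
      ∘ₗ map ψ LinearMap.id
      ∘ₗ (TensorProduct.assoc k C P C).symm.toLinearMap
      ∘ₗ map LinearMap.id ψ
      ∘ₗ (TensorProduct.assoc k C C P).toLinearMap
      ∘ₗ map (Δ k C) LinearMap.id

/-- entwining axiom `(id⊗ε)∘ψ = ε⊗id` -/
def AxCounit : Prop :=
  (TensorProduct.rid k P).toLinearMap ∘ₗ map LinearMap.id (ε k C) ∘ₗ ψ =
    (TensorProduct.lid k P).toLinearMap ∘ₗ map (ε k C) LinearMap.id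

/-- `ψ` is an entwining map for the algebra `P` and the coalgebra `C` -/
def IsEntwining : Prop :=
  AxMul k P C ψ ∧ AxOne k P C ψ ∧ AxComul k P C ψ ∧ AxCounit k P C ψ

variable (e : C)

/-- `e` is a group-like element -/
def IsGrouplike : Prop :=
  Δ k C e = e ⊗ₜ[k] e ∧ ε k C e = 1

variable (ψC : C ⊗[k] C →ₗ[k] C ⊗[k] C)

/-- `(id⊗Δ)∘ψ^C = ψ^C₁₂∘ψ^C₂₃∘(Δ⊗id)` -/
def AxPsiCComul : Prop :=
  map LinearMap.id (Δ k C) ∘ₗ ψC =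
    (TensorProduct.assoc k C C C).toLinearMap
      ∘ₗ map ψC LinearMap.id
      ∘ₗ (TensorProduct.assoc k C C C).symm.toLinearMap
      ∘ₗ map LinearMap.id ψC
      ∘ₗ (TensorProduct.assoc k C C C).toLinearMap
      ∘ₗ map (Δ k C) LinearMap.id

/-- `(id⊗ε)∘ψ^C = ε⊗id` -/
def AxPsiCCounit : Prop :=
  (TensorProduct.rid k C).toLinearMap ∘ₗ map LinearMap.id (ε k C) ∘ₗ ψC =
    (TensorProduct.lid k C).toLinearMap ∘ₗ map (ε k C) LinearMap.id

/-- `ψ^C(e ⊗ c) = Δc` -/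
def AxPsiCUnit : Prop := ∀ c : C, ψC (e ⊗ₜ[k] c) = Δ k C c

/-- `(P, C, ψ, e, ψ^C)` form entwining data -/
def IsEntwiningData : Prop :=
  IsEntwining k P C ψ ∧ IsGrouplike k C e ∧
    AxPsiCComul k C ψC ∧ AxPsiCCounit k C ψC ∧ AxPsiCUnit k C e ψC

/-- the right coaction `Δ_R u = ψ(e ⊗ u)` on `P` -/
def deltaR : P →ₗ[k] P ⊗[k] C := ψ ∘ₗ TensorProduct.mk k C P e

/-- the fixed point subspace `M = P^{coC}_e`, as a submodule of `P` -/
def Msub : Submodule k P where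
  carrier := {x : P | ψ (e ⊗ₜ x) = x ⊗ₜ e}
  add_mem' := by
    intro a b ha hb
    simp only [Set.mem_setOf_eq] at *
    rw [TensorProduct.tmul_add, map_add, ha, hb, TensorProduct.add_tmul]
  zero_mem' := by
    simp only [Set.mem_setOf_eq, TensorProduct.tmul_zero, map_zero,
      TensorProduct.zero_tmul]
  smul_mem' := by
    intro r x hx
    simp only [Set.mem_setOf_eq] at *
    rw [TensorProduct.tmul_smul, map_smul, hx, TensorProduct.smul_tmul']

/-- the subspace `M ⊗ C` of `P ⊗ C` -/
def MCsub : Submodule k (P ⊗[k] C) :=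
  LinearMap.range (map (Msub k P C ψ e).subtype (LinearMap.id : C →ₗ[k] C))

variable (ρ : C ⊗[k] P →ₗ[k] P) (σ : C ⊗[k] C →ₗ[k] P)

/-- the map `ρ̂ : c ⊗ x ↦ ρ(c₍₁₎ ⊗ x_α) ⊗ c₍₂₎^α` -/
def rhat : C ⊗[k] P →ₗ[k] P ⊗[k] C :=
  map ρ LinearMap.id
    ∘ₗ (TensorProduct.assoc k C P C).symm.toLinearMap
    ∘ₗ map LinearMap.id ψ
    ∘ₗ (TensorProduct.assoc k C C P).toLinearMap
    ∘ₗ map (Δ k C) LinearMap.id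

/-- the map `σ̂ : b ⊗ c ↦ σ(b₍₁₎ ⊗ c_A) ⊗ b₍₂₎^A` -/
def shat : C ⊗[k] C →ₗ[k] P ⊗[k] C :=
  map σ LinearMap.id
    ∘ₗ (TensorProduct.assoc k C C C).symm.toLinearMap
    ∘ₗ map LinearMap.id ψC
    ∘ₗ (TensorProduct.assoc k C C C).toLinearMap
    ∘ₗ map (Δ k C) LinearMap.id

/-- multiplication of the first two factors: `x ⊗ (y ⊗ c) ↦ xy ⊗ c` -/
def mulPC : P ⊗[k] (P ⊗[k] C) →ₗ[k] P ⊗[k] C :=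
  map (μ k P) LinearMap.id ∘ₗ (TensorProduct.assoc k P P C).symm.toLinearMap

/-- the crossed product `(x ⊗ b)(y ⊗ c) = xρ(b₍₁₎⊗y_α)σ(b₍₂₎^α₍₁₎⊗c_A) ⊗ b₍₂₎^α₍₂₎^A` -/
def prodX : (P ⊗[k] C) ⊗[k] (P ⊗[k] C) →ₗ[k] P ⊗[k] C :=
  mulPC k P C
    ∘ₗ map LinearMap.id (mulPC k P C)
    ∘ₗ map LinearMap.id
        (map LinearMap.id (shat k P C ψC σ)
          ∘ₗ (TensorProduct.assoc k P C C).toLinearMap)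
    ∘ₗ map LinearMap.id
        (map (rhat k P C ψ ρ) LinearMap.id
          ∘ₗ (TensorProduct.assoc k C P C).symm.toLinearMap)
    ∘ₗ (TensorProduct.assoc k P C (P ⊗[k] C)).toLinearMap

/-- condition (i): `ρ(e,x) = x` for `x ∈ M` and `ρ(c,1) = ε(c)1` -/
def CondI : Prop :=
  (∀ x : P, x ∈ Msub k P C ψ e → ρ (e ⊗ₜ x) = x) ∧
    ∀ c : C, ρ (c ⊗ₜ (1 : P)) = ε k C c • (1 : P)

/-- condition (ii): `ρ̂` maps `C ⊗ M` into `M ⊗ C` -/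
def CondII : Prop :=
  ∀ (c : C) (x : P), x ∈ Msub k P C ψ e →
    rhat k P C ψ ρ (c ⊗ₜ x) ∈ MCsub k P C ψ e

/-- the right hand side of condition (iii): `(μ⊗id)∘(id⊗ρ̂)∘(ρ̂⊗id)` -/
def BmapIII : C ⊗[k] (P ⊗[k] P) →ₗ[k] P ⊗[k] C :=
  mulPC k P C
    ∘ₗ map LinearMap.id (rhat k P C ψ ρ)
    ∘ₗ (TensorProduct.assoc k P C P).toLinearMap
    ∘ₗ map (rhat k P C ψ ρ) LinearMap.id
    ∘ₗ (TensorProduct.assoc k C P P).symm.toLinearMap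

/-- condition (iii): twisted multiplicativity of `ρ` -/
def CondIII : Prop :=
  ∀ (c : C) (x y : P), x ∈ Msub k P C ψ e → y ∈ Msub k P C ψ e →
    rhat k P C ψ ρ (c ⊗ₜ (x * y)) = BmapIII k P C ψ ρ (c ⊗ₜ (x ⊗ₜ y))

/-- `σ` takes values in `M` -/
def SigmaIntoM : Prop := ∀ b c : C, σ (b ⊗ₜ c) ∈ Msub k P C ψ e

/-- condition (iv): `σ(e⊗c) = ε(c)1` and `σ(c₍₁₎⊗e_A) ⊗ c₍₂₎^A = 1 ⊗ c` -/
def CondIV : Prop :=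
  (∀ c : C, σ (e ⊗ₜ c) = ε k C c • (1 : P)) ∧
    ∀ c : C, shat k P C ψC σ (c ⊗ₜ e) = (1 : P) ⊗ₜ c

/-- `(ρ, σ)` are crossed product data: conditions (i)–(iv). -/
def IsCrossedData : Prop :=
  CondI k P C ψ e ρ ∧ CondII k P C ψ e ρ ∧ CondIII k P C ψ e ρ ∧
    SigmaIntoM k P C ψ e σ ∧ CondIV k P C e ψC σ

/-- left hand side of the cocycle condition (2.6) -/
def CocLHS : C ⊗[k] (C ⊗[k] C) →ₗ[k] P ⊗[k] C :=
  mulPC k P C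
    ∘ₗ map LinearMap.id (shat k P C ψC σ)
    ∘ₗ (TensorProduct.assoc k P C C).toLinearMap
    ∘ₗ map (rhat k P C ψ ρ) LinearMap.id
    ∘ₗ (TensorProduct.assoc k C P C).symm.toLinearMap
    ∘ₗ map LinearMap.id (shat k P C ψC σ)

/-- right hand side of the cocycle condition (2.6) -/
def CocRHS : C ⊗[k] (C ⊗[k] C) →ₗ[k] P ⊗[k] C :=
  mulPC k P C
    ∘ₗ map LinearMap.id (shat k P C ψC σ)
    ∘ₗ (TensorProduct.assoc k P C C).toLinearMap
    ∘ₗ map (shat k P C ψC σ) LinearMap.id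
    ∘ₗ (TensorProduct.assoc k C C C).symm.toLinearMap

/-- the cocycle condition (2.6) -/
def Cocycle : Prop := CocLHS k P C ψ ψC ρ σ = CocRHS k P C ψC σ

/-- left hand side of the twisted module condition (2.7) -/
def TwLHS : C ⊗[k] (C ⊗[k] P) →ₗ[k] P ⊗[k] C :=
  mulPC k P C
    ∘ₗ map LinearMap.id (shat k P C ψC σ)
    ∘ₗ (TensorProduct.assoc k P C C).toLinearMap
    ∘ₗ map (rhat k P C ψ ρ) LinearMap.id
    ∘ₗ (TensorProduct.assoc k C P C).symm.toLinearMap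
    ∘ₗ map LinearMap.id (rhat k P C ψ ρ)

/-- right hand side of the twisted module condition (2.7) -/
def TwRHS : C ⊗[k] (C ⊗[k] P) →ₗ[k] P ⊗[k] C :=
  mulPC k P C
    ∘ₗ map LinearMap.id (rhat k P C ψ ρ)
    ∘ₗ (TensorProduct.assoc k P C P).toLinearMap
    ∘ₗ map (shat k P C ψC σ) LinearMap.id
    ∘ₗ (TensorProduct.assoc k C C P).symm.toLinearMap

/-- the twisted module condition (2.7), for `x ∈ M` -/
def Twisted : Prop :=
  ∀ (a b : C) (x : P), x ∈ Msub k P C ψ e →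
    TwLHS k P C ψ ψC ρ σ (a ⊗ₜ (b ⊗ₜ x)) = TwRHS k P C ψ ψC ρ σ (a ⊗ₜ (b ⊗ₜ x))

end Entwine

namespace Entwine

section Cleft
variable (k : Type) [Field k] (P : Type) [Ring P] [Algebra k P]
    (C : Type) [AddCommGroup C] [Module k C] [Coalgebra k C]
    (ψ : C ⊗[k] P →ₗ[k] P ⊗[k] C) (e : C) (ψC : C ⊗[k] C →ₗ[k] C ⊗[k] C)
    (Φ Φi : C →ₗ[k] P)

/-- `Φi` is a convolution inverse of `Φ` in `Hom(C, P)` -/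
def ConvInv : Prop :=
  (μ k P ∘ₗ map Φ Φi ∘ₗ Δ k C = Algebra.linearMap k P ∘ₗ ε k C) ∧
    (μ k P ∘ₗ map Φi Φ ∘ₗ Δ k C = Algebra.linearMap k P ∘ₗ ε k C)

/-- the covariance condition `ψ∘(id⊗Φ) = (Φ⊗id)∘ψ^C` -/
def CovPhi : Prop :=
  ψ ∘ₗ map LinearMap.id Φ = map Φ LinearMap.id ∘ₗ ψC

/-- `ρ(c ⊗ u) = Φ(c₍₁₎) u_α Φ⁻¹(c₍₂₎^α)` -/
def rhoPhi : C ⊗[k] P →ₗ[k] P :=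
  μ k P
    ∘ₗ map LinearMap.id (μ k P)
    ∘ₗ map Φ (map LinearMap.id Φi)
    ∘ₗ map LinearMap.id ψ
    ∘ₗ (TensorProduct.assoc k C C P).toLinearMap
    ∘ₗ map (Δ k C) LinearMap.id

/-- `σ(b ⊗ c) = Φ(b₍₁₎) Φ(c_A) Φ⁻¹(b₍₂₎^A)` -/
def sigmaPhi : C ⊗[k] C →ₗ[k] P :=
  μ k P
    ∘ₗ map LinearMap.id (μ k P)
    ∘ₗ map Φ (map Φ Φi)
    ∘ₗ map LinearMap.id ψC
    ∘ₗ (TensorProduct.assoc k C C C).toLinearMap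
    ∘ₗ map (Δ k C) LinearMap.id

/-- `Θ : x ⊗ c ↦ x Φ(c)` -/
def Theta : P ⊗[k] C →ₗ[k] P := μ k P ∘ₗ map LinearMap.id Φ

/-- `Θ⁻¹ : u ↦ u_α Φ⁻¹(e^α₍₁₎) ⊗ e^α₍₂₎` -/
def ThetaInv : P →ₗ[k] P ⊗[k] C :=
  mulPC k P C
    ∘ₗ map LinearMap.id (map Φi LinearMap.id)
    ∘ₗ map LinearMap.id (Δ k C)
    ∘ₗ deltaR k P C ψ e

end Cleft

end Entwine

namespace Entwine

section Stmt12
variable (k : Type) [Field k] (P : Type) [Ring P] [Algebra k P]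
    (C : Type) [AddCommGroup C] [Module k C] [Coalgebra k C]
    (ψ : C ⊗[k] P →ₗ[k] P ⊗[k] C) (e : C) (ψC : C ⊗[k] C →ₗ[k] C ⊗[k] C)
    (Φ Φi : C →ₗ[k] P)

/-- the map `b ⊗ (y ⊗ c) ↦ (y_α ⊗ c_A) ⊗ b^{αA}` -/
def moveThrough12 : C ⊗[k] (P ⊗[k] C) →ₗ[k] (P ⊗[k] C) ⊗[k] C :=
  (TensorProduct.assoc k P C C).symm.toLinearMap
    ∘ₗ map LinearMap.id ψC
    ∘ₗ (TensorProduct.assoc k P C C).toLinearMap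
    ∘ₗ map ψ LinearMap.id
    ∘ₗ (TensorProduct.assoc k C P C).symm.toLinearMap

/-- the explicit cleft product
`(x ⊗ b)(y ⊗ c) = xΦ(b₍₁₎) y_α Φ(c_A) Φ⁻¹(b₍₂₎^{αA}₍₁₎) ⊗ b₍₂₎^{αA}₍₂₎` -/
def cleftProd : (P ⊗[k] C) ⊗[k] (P ⊗[k] C) →ₗ[k] P ⊗[k] C :=
  mulPC k P C
    ∘ₗ map LinearMap.id (mulPC k P C)
    ∘ₗ map (Theta k P C Φ) LinearMap.id
    ∘ₗ map LinearMap.id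
        (map (Theta k P C Φ) (map Φi LinearMap.id ∘ₗ Δ k C))
    ∘ₗ map LinearMap.id (moveThrough12 k P C ψ ψC)
    ∘ₗ (TensorProduct.assoc k (P ⊗[k] C) C (P ⊗[k] C)).toLinearMap
    ∘ₗ map (TensorProduct.assoc k P C C).symm.toLinearMap LinearMap.id
    ∘ₗ map (map LinearMap.id (Δ k C)) LinearMap.id

section Aux

set_option linter.unusedSectionVars false

variable {k : Type} [Field k] {P : Type} [Ring P] [Algebra k P]
    {C : Type} [AddCommGroup C] [Module k C] [Coalgebra k C]
    {ψ : C ⊗[k] P →ₗ[k] P ⊗[k] C} {e : C} {ψC : C ⊗[k] C →ₗ[k] C ⊗[k] C}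
    {Φ Φi : C →ₗ[k] P}

lemma mulPC_tmul (u : P) (w : P ⊗[k] C) : mulPC k P C (u ⊗ₜ w) = u • w := by
  induction w using TensorProduct.induction_on with
  | zero => simp
  | tmul v c => simp [mulPC, TensorProduct.smul_tmul']
  | add x y hx hy => rw [tmul_add, map_add, hx, hy, smul_add]

lemma theta_tmul (f : C →ₗ[k] P) (u : P) (c : C) :
    Theta k P C f (u ⊗ₜ c) = u * f c := by
  simp [Theta]

lemma theta_smul (f : C →ₗ[k] P) (u : P) (w : P ⊗[k] C) :
    Theta k P C f (u • w) = u * Theta k P C f w := by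
  induction w using TensorProduct.induction_on with
  | zero => simp
  | tmul v c => simp [theta_tmul, TensorProduct.smul_tmul', mul_assoc]
  | add x y hx hy => rw [smul_add, map_add, hx, hy, map_add, mul_add]

/-- the right action `(u ⊗ c) ◁ v = u ψ(c ⊗ v)` of `P` on `P ⊗ C` -/
def actR (ψ : C ⊗[k] P →ₗ[k] P ⊗[k] C) : P ⊗[k] C →ₗ[k] P →ₗ[k] P ⊗[k] C :=
  TensorProduct.curry
    (mulPC k P C ∘ₗ map LinearMap.id ψ ∘ₗ (TensorProduct.assoc k P C P).toLinearMap)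

lemma actR_tmul (u : P) (c : C) (v : P) :
    actR ψ (u ⊗ₜ c) v = u • ψ (c ⊗ₜ v) := by
  simp [actR, mulPC_tmul]

lemma actR_smul (u : P) (w : P ⊗[k] C) (v : P) :
    actR ψ (u • w) v = u • actR ψ w v := by
  induction w using TensorProduct.induction_on with
  | zero => simp
  | tmul a c => simp [actR_tmul, TensorProduct.smul_tmul', mul_smul]
  | add x y hx hy => simp only [smul_add, map_add, LinearMap.add_apply, hx, hy]

lemma psi_mul (h : AxMul k P C ψ) (c : C) (u v : P) :
    ψ (c ⊗ₜ (u * v)) = actR ψ (ψ (c ⊗ₜ u)) v := by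
  have h1 := LinearMap.congr_fun h (c ⊗ₜ (u ⊗ₜ v))
  simpa [actR, mulPC] using h1

lemma deltaR_apply (u : P) : deltaR k P C ψ e u = ψ (e ⊗ₜ u) := by
  simp [deltaR]

lemma deltaR_mul (h : AxMul k P C ψ) (u v : P) :
    deltaR k P C ψ e (u * v) = actR ψ (deltaR k P C ψ e u) v := by
  simp only [deltaR_apply, psi_mul h]

lemma deltaR_mul_of_mem (h : AxMul k P C ψ) {x : P} (hx : x ∈ Msub k P C ψ e) (u : P) :
    deltaR k P C ψ e (x * u) = x • deltaR k P C ψ e u := by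
  have hx' : ψ (e ⊗ₜ x) = x ⊗ₜ e := hx
  rw [deltaR_mul h, deltaR_apply, hx', actR_tmul, deltaR_apply]

lemma psi_cov (h : CovPhi k P C ψ ψC Φ) (b c : C) :
    ψ (b ⊗ₜ Φ c) = map Φ LinearMap.id (ψC (b ⊗ₜ c)) := by
  simpa using LinearMap.congr_fun h (b ⊗ₜ c)

lemma deltaR_cov (h : CovPhi k P C ψ ψC Φ) (hu : AxPsiCUnit k C e ψC) (c : C) :
    deltaR k P C ψ e (Φ c) = map Φ LinearMap.id (Δ k C c) := by
  rw [deltaR_apply, psi_cov h, hu]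

lemma deltaR_coassoc (h : AxComul k P C ψ) (he : Δ k C e = e ⊗ₜ[k] e) (u : P) :
    map LinearMap.id (Δ k C) (deltaR k P C ψ e u) =
      TensorProduct.assoc k P C C
        (map (deltaR k P C ψ e) LinearMap.id (deltaR k P C ψ e u)) := by
  have h1 := LinearMap.congr_fun h (e ⊗ₜ u)
  simp only [LinearMap.comp_apply, map_tmul, he, LinearMap.id_apply,
    LinearEquiv.coe_coe, assoc_tmul] at h1
  rw [deltaR_apply, h1]
  generalize ψ (e ⊗ₜ u) = w
  congr 1
  induction w using TensorProduct.induction_on with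
  | zero => simp
  | tmul a c => simp [deltaR_apply]
  | add x y hx hy => simp only [tmul_add, map_add, hx, hy]

/-- the convolution action `(f ⋆ h)(c) = f(c₍₁₎) h(c₍₂₎)` -/
def convAct (f : C →ₗ[k] P) (h : C →ₗ[k] P ⊗[k] C) : C →ₗ[k] P ⊗[k] C :=
  mulPC k P C ∘ₗ map f h ∘ₗ Δ k C

lemma convAct_convAct (f g : C →ₗ[k] P) (h : C →ₗ[k] P ⊗[k] C) :
    convAct f (convAct g h) = convAct (μ k P ∘ₗ map f g ∘ₗ Δ k C) h := by
  ext c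
  have h1 : mulPC k P C ∘ₗ map f (convAct g h) =
      mulPC k P C ∘ₗ map f (mulPC k P C ∘ₗ map g h) ∘ₗ map LinearMap.id (Δ k C) := by
    ext a b; simp [convAct]
  have h2 : mulPC k P C ∘ₗ map (μ k P ∘ₗ map f g ∘ₗ Δ k C) h =
      mulPC k P C ∘ₗ map f (mulPC k P C ∘ₗ map g h) ∘ₗ
        (TensorProduct.assoc k C C C).toLinearMap ∘ₗ map (Δ k C) LinearMap.id := by
    apply TensorProduct.ext'
    intro a b
    simp only [LinearMap.comp_apply, map_tmul, LinearMap.id_apply, LinearEquiv.coe_coe]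
    generalize Δ k C a = w
    induction w using TensorProduct.induction_on with
    | zero => simp
    | tmul a c => simp [mulPC_tmul, mul_smul]
    | add x y hx hy => simp only [add_tmul, map_add, hx, hy]
  have h3 := LinearMap.congr_fun h1 (Δ k C c)
  have h4 := LinearMap.congr_fun h2 (Δ k C c)
  have h5 := Coalgebra.coassoc_apply (R := k) c
  simp only [LinearMap.comp_apply, LinearEquiv.coe_coe] at h3 h4
  simp only [LinearMap.rTensor, LinearMap.lTensor] at h5
  rw [convAct, LinearMap.comp_apply, LinearMap.comp_apply, h3, convAct,
    LinearMap.comp_apply, LinearMap.comp_apply, h4, h5]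

lemma convAct_counit (h : C →ₗ[k] P ⊗[k] C) :
    convAct (Algebra.linearMap k P ∘ₗ ε k C) h = h := by
  ext c
  have h1 : mulPC k P C ∘ₗ map (Algebra.linearMap k P ∘ₗ ε k C) h =
      h ∘ₗ (TensorProduct.lid k C).toLinearMap ∘ₗ map (ε k C) LinearMap.id := by
    apply TensorProduct.ext'
    intro a b
    simp [mulPC_tmul]
  have h2 := LinearMap.congr_fun h1 (Δ k C c)
  have h3 := Coalgebra.rTensor_counit_comul (R := k) c
  simp only [LinearMap.comp_apply, LinearEquiv.coe_coe] at h2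
  simp only [LinearMap.rTensor] at h3
  rw [convAct, LinearMap.comp_apply, LinearMap.comp_apply, h2, h3]
  simp

/-- `ψ(c₍₁₎ ⊗ Φ⁻¹(c₍₂₎)) = Φ⁻¹(c) ⊗ e` -/
lemma psi_convInv (hdata : IsEntwiningData k P C ψ e ψC) (hconv : ConvInv k P C Φ Φi)
    (hcov : CovPhi k P C ψ ψC Φ) (c : C) :
    ψ (map LinearMap.id Φi (Δ k C c)) = Φi c ⊗ₜ e := by
  obtain ⟨⟨hmul, hone, -, -⟩, -, -, -, hunit⟩ := hdata
  set h : C →ₗ[k] P ⊗[k] C := ψ ∘ₗ map LinearMap.id Φi ∘ₗ Δ k C with hh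
  have key : convAct Φ h =
      TensorProduct.mk k P C 1 ∘ₗ LinearMap.toSpanSingleton k C e ∘ₗ ε k C := by
    ext c
    have h1 : mulPC k P C ∘ₗ map Φ h =
        (mulPC k P C ∘ₗ map Φ (ψ ∘ₗ map LinearMap.id Φi)) ∘ₗ map LinearMap.id (Δ k C) := by
      apply TensorProduct.ext'
      intro a b
      simp [hh]
    have h2 : (mulPC k P C ∘ₗ map Φ (ψ ∘ₗ map LinearMap.id Φi)) ∘ₗ
        (TensorProduct.assoc k C C C).toLinearMap ∘ₗ map (Δ k C) LinearMap.id =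
        deltaR k P C ψ e ∘ₗ μ k P ∘ₗ map Φ Φi := by
      apply TensorProduct.ext'
      intro a b
      simp only [LinearMap.comp_apply, map_tmul, LinearMap.id_apply, LinearEquiv.coe_coe,
        LinearMap.mul'_apply, deltaR_mul hmul, deltaR_cov hcov hunit]
      generalize Δ k C a = w
      induction w using TensorProduct.induction_on with
      | zero => simp
      | tmul a c => simp [mulPC_tmul, actR_tmul]
      | add x y hx hy => simp only [add_tmul, map_add, hx, hy, LinearMap.add_apply]
    have h3 := LinearMap.congr_fun h1 (Δ k C c)
    have h4 := LinearMap.congr_fun h2 (Δ k C c)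
    have h5 := Coalgebra.coassoc_apply (R := k) c
    have h6 := LinearMap.congr_fun hconv.1 c
    simp only [LinearMap.rTensor, LinearMap.lTensor] at h5
    simp only [LinearMap.comp_apply, LinearEquiv.coe_coe] at h3 h4 h6
    rw [h5] at h4
    rw [convAct, LinearMap.comp_apply, LinearMap.comp_apply, h3, h4, h6]
    simp [Algebra.algebraMap_eq_smul_one, deltaR_apply, hone e, ← TensorProduct.tmul_smul]
  have h1 : h = convAct Φi (convAct Φ h) := by
    rw [convAct_convAct, hconv.2, convAct_counit]
  change h c = _
  rw [h1, key]
  have h2 : mulPC k P C ∘ₗ map Φi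
      (TensorProduct.mk k P C 1 ∘ₗ LinearMap.toSpanSingleton k C e ∘ₗ ε k C) =
      (TensorProduct.mk k P C).flip e ∘ₗ Φi ∘ₗ (TensorProduct.rid k C).toLinearMap ∘ₗ
        map LinearMap.id (ε k C) := by
    apply TensorProduct.ext'
    intro a b
    simp [mulPC_tmul, TensorProduct.smul_tmul']
  have h3 := LinearMap.congr_fun h2 (Δ k C c)
  have h4 := Coalgebra.lTensor_counit_comul (R := k) c
  simp only [LinearMap.lTensor] at h4
  rw [LinearMap.comp_apply] at h3
  rw [convAct, LinearMap.comp_apply, LinearMap.comp_apply, h3]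
  simp only [LinearMap.comp_apply]
  rw [h4]
  simp

/-- the projection `u ↦ u₍₀₎ Φ⁻¹(u₍₁₎)` of `P` onto `M` -/
def proj (ψ : C ⊗[k] P →ₗ[k] P ⊗[k] C) (e : C) (Φi : C →ₗ[k] P) : P →ₗ[k] P :=
  Theta k P C Φi ∘ₗ deltaR k P C ψ e

lemma proj_mem (hdata : IsEntwiningData k P C ψ e ψC) (hconv : ConvInv k P C Φ Φi)
    (hcov : CovPhi k P C ψ ψC Φ) (u : P) : proj ψ e Φi u ∈ Msub k P C ψ e := by
  have hmul := hdata.1.1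
  have hκ := psi_convInv hdata hconv hcov
  have hco := deltaR_coassoc hdata.1.2.2.1 hdata.2.1.1 u
  change ψ (e ⊗ₜ proj ψ e Φi u) = proj ψ e Φi u ⊗ₜ e
  rw [← deltaR_apply, proj, LinearMap.comp_apply]
  have h1 : deltaR k P C ψ e ∘ₗ Theta k P C Φi =
      (mulPC k P C ∘ₗ map LinearMap.id (ψ ∘ₗ map LinearMap.id Φi)) ∘ₗ
        (TensorProduct.assoc k P C C).toLinearMap ∘ₗ
          map (deltaR k P C ψ e) LinearMap.id := by
    apply TensorProduct.ext'
    intro a b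
    simp only [LinearMap.comp_apply, map_tmul, LinearMap.id_apply, LinearEquiv.coe_coe,
      theta_tmul, deltaR_mul hmul]
    generalize deltaR k P C ψ e a = w
    induction w using TensorProduct.induction_on with
    | zero => simp
    | tmul a c => simp [mulPC_tmul, actR_tmul]
    | add x y hx hy => simp only [add_tmul, map_add, hx, hy, LinearMap.add_apply]
  have h2 := LinearMap.congr_fun h1 (deltaR k P C ψ e u)
  simp only [LinearMap.comp_apply, LinearEquiv.coe_coe] at h2
  rw [← hco] at h2
  rw [h2]
  generalize deltaR k P C ψ e u = w
  induction w using TensorProduct.induction_on with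
  | zero => simp
  | tmul a c => simp [mulPC_tmul, hκ, theta_tmul, TensorProduct.smul_tmul']
  | add x y hx hy => simp only [add_tmul, map_add, hx, hy]

lemma proj_mul_of_mem (h : AxMul k P C ψ) {x : P} (hx : x ∈ Msub k P C ψ e) (u : P) :
    proj ψ e Φi (x * u) = x * proj ψ e Φi u := by
  rw [proj, LinearMap.comp_apply, deltaR_mul_of_mem h hx, theta_smul, LinearMap.comp_apply]

lemma thetaInv_eq (h : AxComul k P C ψ) (he : Δ k C e = e ⊗ₜ[k] e) (u : P) :
    ThetaInv k P C ψ e Φi u =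
      map (proj ψ e Φi) LinearMap.id (deltaR k P C ψ e u) := by
  simp only [ThetaInv, LinearMap.comp_apply]
  rw [deltaR_coassoc h he]
  generalize deltaR k P C ψ e u = w
  induction w using TensorProduct.induction_on with
  | zero => simp
  | tmul a c =>
    simp only [map_tmul, proj, LinearMap.comp_apply, LinearMap.id_apply]
    generalize deltaR k P C ψ e a = w
    induction w using TensorProduct.induction_on with
    | zero => simp
    | tmul a c => simp [mulPC_tmul, theta_tmul, TensorProduct.smul_tmul']
    | add x y hx hy => simp only [add_tmul, map_add, hx, hy]
  | add x y hx hy => simp only [map_add, hx, hy]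

lemma map_mem_MCsub {f : P →ₗ[k] P} (hf : ∀ u, f u ∈ Msub k P C ψ e) (w : P ⊗[k] C) :
    map f LinearMap.id w ∈ MCsub k P C ψ e := by
  induction w using TensorProduct.induction_on with
  | zero => simp
  | tmul a c => exact ⟨⟨f a, hf a⟩ ⊗ₜ c, by simp⟩
  | add x y hx hy => rw [map_add]; exact Submodule.add_mem _ hx hy

lemma MCsub_induction {p : (w : P ⊗[k] C) → w ∈ MCsub k P C ψ e → Prop}
    (zero : p 0 (Submodule.zero_mem _))
    (tmul : ∀ x (hx : x ∈ Msub k P C ψ e) c, p (x ⊗ₜ c) ⟨⟨x, hx⟩ ⊗ₜ c, by simp⟩)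
    (hadd : ∀ u v hu hv, p u hu → p v hv → p (u + v) (Submodule.add_mem _ hu hv))
    {w : P ⊗[k] C} (hw : w ∈ MCsub k P C ψ e) : p w hw := by
  obtain ⟨t, rfl⟩ := hw
  induction t using TensorProduct.induction_on with
  | zero => simpa only [map_zero] using zero
  | tmul a c => exact tmul a a.2 c
  | add x y hx hy => simpa only [map_add] using hadd _ _ _ _ hx hy

lemma thetaInv_mem (hdata : IsEntwiningData k P C ψ e ψC) (hconv : ConvInv k P C Φ Φi)
    (hcov : CovPhi k P C ψ ψC Φ) (u : P) :
    ThetaInv k P C ψ e Φi u ∈ MCsub k P C ψ e := by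
  rw [thetaInv_eq hdata.1.2.2.1 hdata.2.1.1]
  exact map_mem_MCsub (proj_mem hdata hconv hcov) _

/-- the map `u ⊗ c ↦ u Φ⁻¹(c₍₁₎) ⊗ c₍₂₎` -/
def unfoldR (Φi : C →ₗ[k] P) : P ⊗[k] C →ₗ[k] P ⊗[k] C :=
  mulPC k P C ∘ₗ map LinearMap.id (map Φi LinearMap.id ∘ₗ Δ k C)

lemma unfoldR_tmul (u : P) (c : C) :
    unfoldR Φi (u ⊗ₜ c) = u • map Φi LinearMap.id (Δ k C c) := by
  simp [unfoldR, mulPC_tmul]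

lemma unfoldR_smul (u : P) (w : P ⊗[k] C) :
    unfoldR Φi (u • w) = u • unfoldR Φi w := by
  induction w using TensorProduct.induction_on with
  | zero => simp
  | tmul a c => simp [unfoldR_tmul, TensorProduct.smul_tmul', mul_smul]
  | add x y hx hy => simp only [smul_add, map_add, hx, hy]

lemma thetaInv_eq_unfoldR (u : P) :
    ThetaInv k P C ψ e Φi u = unfoldR Φi (deltaR k P C ψ e u) := by
  simp only [ThetaInv, unfoldR, LinearMap.comp_apply]
  congr 1
  rw [← LinearMap.comp_apply (map _ _) (map _ _), ← map_comp, LinearMap.id_comp]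

lemma thetaInv_mul_of_mem (h : AxMul k P C ψ) {x : P} (hx : x ∈ Msub k P C ψ e) (u : P) :
    ThetaInv k P C ψ e Φi (x * u) = x • ThetaInv k P C ψ e Φi u := by
  rw [thetaInv_eq_unfoldR, deltaR_mul_of_mem h hx, unfoldR_smul, thetaInv_eq_unfoldR]

lemma theta_thetaInv (hcounit : AxCounit k P C ψ) (he : ε k C e = 1)
    (hconv : ConvInv k P C Φ Φi) (u : P) :
    Theta k P C Φ (ThetaInv k P C ψ e Φi u) = u := by
  have h1 := LinearMap.congr_fun hcounit (e ⊗ₜ u)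
  simp only [LinearMap.comp_apply, map_tmul, he, LinearMap.id_apply, LinearEquiv.coe_coe,
    lid_tmul, one_smul] at h1
  rw [thetaInv_eq_unfoldR, deltaR_apply]
  refine Eq.trans ?_ h1
  generalize ψ (e ⊗ₜ u) = w
  induction w using TensorProduct.induction_on with
  | zero => simp
  | tmul a c =>
    have h2 := LinearMap.congr_fun hconv.2 c
    have h3 : Theta k P C Φ (map Φi LinearMap.id (Δ k C c)) = algebraMap k P (ε k C c) := by
      refine Eq.trans ?_ h2
      simp only [Theta, LinearMap.comp_apply]
      rw [← LinearMap.comp_apply (map _ _) (map _ _), ← map_comp, LinearMap.id_comp,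
        LinearMap.comp_id]
    rw [unfoldR_tmul, theta_smul, h3]
    simp [Algebra.algebraMap_eq_smul_one]
  | add x y hx hy => simp only [map_add, hx, hy]

lemma unfoldR_map_comul (hconv : ConvInv k P C Φ Φi) (c : C) :
    unfoldR Φi (map Φ LinearMap.id (Δ k C c)) = 1 ⊗ₜ c := by
  have h1 : unfoldR Φi ∘ₗ map Φ LinearMap.id ∘ₗ Δ k C =
      convAct Φ (convAct Φi (TensorProduct.mk k P C 1)) := by
    have h2 : unfoldR Φi ∘ₗ map Φ LinearMap.id =
        mulPC k P C ∘ₗ map Φ (convAct Φi (TensorProduct.mk k P C 1)) := by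
      apply TensorProduct.ext'
      intro a b
      simp only [LinearMap.comp_apply, map_tmul, unfoldR_tmul, mulPC_tmul, convAct,
        LinearMap.id_apply]
      congr 1
      generalize Δ k C b = w
      induction w using TensorProduct.induction_on with
      | zero => simp
      | tmul a c => simp [mulPC_tmul, TensorProduct.smul_tmul']
      | add x y hx hy => simp only [map_add, hx, hy]
    rw [← LinearMap.comp_assoc, h2, LinearMap.comp_assoc]; rfl
  rw [convAct_convAct, hconv.1, convAct_counit] at h1
  simpa using LinearMap.congr_fun h1 c

lemma thetaInv_theta (hmul : AxMul k P C ψ) (hunit : AxPsiCUnit k C e ψC)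
    (hconv : ConvInv k P C Φ Φi) (hcov : CovPhi k P C ψ ψC Φ) {w : P ⊗[k] C}
    (hw : w ∈ MCsub k P C ψ e) :
    ThetaInv k P C ψ e Φi (Theta k P C Φ w) = w := by
  induction hw using MCsub_induction with
  | zero => simp
  | tmul x hx c =>
    rw [theta_tmul, thetaInv_mul_of_mem hmul hx, thetaInv_eq_unfoldR, deltaR_cov hcov hunit,
      unfoldR_map_comul hconv, TensorProduct.smul_tmul', smul_eq_mul, mul_one]
  | hadd u v _ _ hu hv => simp only [map_add, hu, hv]

lemma rhoPhi_eq (hmul : AxMul k P C ψ) (hunit : AxPsiCUnit k C e ψC)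
    (hcov : CovPhi k P C ψ ψC Φ) (c : C) (u : P) :
    rhoPhi k P C ψ Φ Φi (c ⊗ₜ u) = proj ψ e Φi (Φ c * u) := by
  simp only [proj, LinearMap.comp_apply, deltaR_mul hmul, deltaR_cov hcov hunit, rhoPhi,
    map_tmul, LinearEquiv.coe_coe, LinearMap.id_apply]
  generalize Δ k C c = w
  induction w using TensorProduct.induction_on with
  | zero => simp
  | tmul a c =>
    simp only [assoc_tmul, map_tmul, LinearMap.id_apply, actR_tmul, theta_smul]
    rw [LinearMap.mul'_apply]
    rfl
  | add x y hx hy => simp only [add_tmul, map_add, hx, hy, LinearMap.add_apply]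

lemma rhat_rhoPhi (hdata : IsEntwiningData k P C ψ e ψC)
    (hcov : CovPhi k P C ψ ψC Φ) (c : C) (u : P) :
    rhat k P C ψ (rhoPhi k P C ψ Φ Φi) (c ⊗ₜ u) = ThetaInv k P C ψ e Φi (Φ c * u) := by
  have hmul := hdata.1.1
  have hunit := hdata.2.2.2.2
  have hρ := fun c u => rhoPhi_eq (Φi := Φi) hmul hunit hcov c u
  rw [thetaInv_eq hdata.1.2.2.1 hdata.2.1.1, deltaR_mul hmul, deltaR_cov hcov hunit]
  simp only [rhat, LinearMap.comp_apply, map_tmul, LinearEquiv.coe_coe, LinearMap.id_apply]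
  generalize Δ k C c = w
  induction w using TensorProduct.induction_on with
  | zero => simp
  | tmul a c =>
    simp only [assoc_tmul, map_tmul, LinearMap.id_apply, actR_tmul]
    generalize ψ (c ⊗ₜ u) = w
    induction w using TensorProduct.induction_on with
    | zero => simp
    | tmul v c => simp [hρ, TensorProduct.smul_tmul']
    | add x y hx hy => simp only [tmul_add, smul_add, map_add, hx, hy]
  | add x y hx hy => simp only [add_tmul, map_add, hx, hy, LinearMap.add_apply]

lemma sigmaPhi_eq (hcov : CovPhi k P C ψ ψC Φ) (b c : C) :
    sigmaPhi k P C ψC Φ Φi (b ⊗ₜ c) = rhoPhi k P C ψ Φ Φi (b ⊗ₜ Φ c) := by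
  simp only [sigmaPhi, rhoPhi, LinearMap.comp_apply, map_tmul, LinearEquiv.coe_coe,
    LinearMap.id_apply]
  generalize Δ k C b = w
  induction w using TensorProduct.induction_on with
  | zero => simp
  | tmul a b =>
    simp only [assoc_tmul, map_tmul, LinearMap.id_apply, psi_cov hcov]
    rw [← LinearMap.comp_apply (map _ _) (map _ _), ← map_comp, LinearMap.id_comp,
      LinearMap.comp_id]
  | add x y hx hy => simp only [add_tmul, map_add, hx, hy]

lemma shat_sigmaPhi (hcov : CovPhi k P C ψ ψC Φ) (b c : C) :
    shat k P C ψC (sigmaPhi k P C ψC Φ Φi) (b ⊗ₜ c) =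
      rhat k P C ψ (rhoPhi k P C ψ Φ Φi) (b ⊗ₜ Φ c) := by
  have hσ := sigmaPhi_eq (Φi := Φi) hcov
  simp only [rhat, shat, LinearMap.comp_apply, map_tmul, LinearEquiv.coe_coe,
    LinearMap.id_apply]
  generalize Δ k C b = w
  induction w using TensorProduct.induction_on with
  | zero => simp
  | tmul a b =>
    simp only [assoc_tmul, map_tmul, LinearMap.id_apply, psi_cov hcov]
    generalize ψC (b ⊗ₜ c) = w
    induction w using TensorProduct.induction_on with
    | zero => simp
    | tmul v c => simp [hσ]
    | add x y hx hy => simp only [tmul_add, map_add, hx, hy]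
  | add x y hx hy => simp only [add_tmul, map_add, hx, hy]

/-- Since `ρ̂(c ⊗ u) = Θ⁻¹(Φ(c) u)`, acting by `ρ̂` on the last two legs of `M ⊗ C ⊗ P`
is `Θ` followed by multiplication and `Θ⁻¹`. -/
lemma mulPC_rhat_rhoPhi (hdata : IsEntwiningData k P C ψ e ψC)
    (hcov : CovPhi k P C ψ ψC Φ) {w : P ⊗[k] C} (hw : w ∈ MCsub k P C ψ e) (u : P) :
    mulPC k P C (map LinearMap.id (rhat k P C ψ (rhoPhi k P C ψ Φ Φi))
      (TensorProduct.assoc k P C P (w ⊗ₜ u))) =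
      ThetaInv k P C ψ e Φi (Theta k P C Φ w * u) := by
  induction hw using MCsub_induction with
  | zero => simp
  | tmul x hx c =>
    rw [assoc_tmul, map_tmul, LinearMap.id_apply, mulPC_tmul, rhat_rhoPhi hdata hcov,
      theta_tmul, mul_assoc, thetaInv_mul_of_mem hdata.1.1 hx]
  | hadd u v _ _ hu hv => simp only [map_add, add_tmul, add_mul, hu, hv]

lemma mulPC_shat_sigmaPhi (hdata : IsEntwiningData k P C ψ e ψC)
    (hcov : CovPhi k P C ψ ψC Φ) {w : P ⊗[k] C} (hw : w ∈ MCsub k P C ψ e) (c : C) :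
    mulPC k P C (map LinearMap.id (shat k P C ψC (sigmaPhi k P C ψC Φ Φi))
      (TensorProduct.assoc k P C C (w ⊗ₜ c))) =
      ThetaInv k P C ψ e Φi (Theta k P C Φ w * Φ c) := by
  rw [← mulPC_rhat_rhoPhi hdata hcov hw]
  clear hw
  have hs := shat_sigmaPhi (Φi := Φi) hcov
  induction w using TensorProduct.induction_on with
  | zero => simp
  | tmul v b => simp [hs]
  | add x y hx hy => simp only [add_tmul, map_add, hx, hy]

lemma prodX_tmul (hdata : IsEntwiningData k P C ψ e ψC) (hconv : ConvInv k P C Φ Φi)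
    (hcov : CovPhi k P C ψ ψC Φ) (x y : P) (b c : C) :
    prodX k P C ψ ψC (rhoPhi k P C ψ Φ Φi) (sigmaPhi k P C ψC Φ Φi)
      ((x ⊗ₜ b) ⊗ₜ (y ⊗ₜ c)) = x • ThetaInv k P C ψ e Φi (Φ b * y * Φ c) := by
  simp only [prodX, LinearMap.comp_apply, LinearEquiv.coe_coe, assoc_tmul, map_tmul,
    assoc_symm_tmul, LinearMap.id_apply, mulPC_tmul, rhat_rhoPhi hdata hcov]
  rw [mulPC_shat_sigmaPhi hdata hcov (thetaInv_mem hdata hconv hcov _),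
    theta_thetaInv hdata.1.2.2.2 hdata.2.1.2 hconv]

lemma prodX_eq (hdata : IsEntwiningData k P C ψ e ψC) (hconv : ConvInv k P C Φ Φi)
    (hcov : CovPhi k P C ψ ψC Φ) {u v : P ⊗[k] C} (hu : u ∈ MCsub k P C ψ e) :
    prodX k P C ψ ψC (rhoPhi k P C ψ Φ Φi) (sigmaPhi k P C ψC Φ Φi) (u ⊗ₜ v) =
      ThetaInv k P C ψ e Φi (Theta k P C Φ u * Theta k P C Φ v) := by
  induction hu using MCsub_induction with
  | zero => simp
  | tmul x hx b =>
    induction v using TensorProduct.induction_on with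
    | zero => simp
    | tmul y c =>
      rw [prodX_tmul hdata hconv hcov, theta_tmul, theta_tmul, ← thetaInv_mul_of_mem hdata.1.1 hx]
      simp only [mul_assoc]
    | add y z hy hz => simp only [map_add, tmul_add, mul_add, hy, hz]
  | hadd u v _ _ hu hv => simp only [map_add, add_tmul, add_mul, hu, hv]

lemma moveThrough12_eq (hmul : AxMul k P C ψ) (hcov : CovPhi k P C ψ ψC Φ) (b c : C) (y : P) :
    map (Theta k P C Φ) LinearMap.id (moveThrough12 k P C ψ ψC (b ⊗ₜ (y ⊗ₜ c))) =
      ψ (b ⊗ₜ (y * Φ c)) := by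
  simp only [psi_mul hmul, moveThrough12, LinearMap.comp_apply, LinearEquiv.coe_coe,
    assoc_symm_tmul, map_tmul, LinearMap.id_apply]
  generalize ψ (b ⊗ₜ y) = w
  induction w using TensorProduct.induction_on with
  | zero => simp
  | tmul v b =>
    simp only [assoc_tmul, map_tmul, LinearMap.id_apply, actR_tmul, psi_cov hcov]
    generalize ψC (b ⊗ₜ c) = w
    induction w using TensorProduct.induction_on with
    | zero => simp
    | tmul d f => simp [theta_tmul, TensorProduct.smul_tmul']
    | add x y hx hy => simp only [tmul_add, smul_add, map_add, hx, hy]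
  | add x y hx hy => simp only [add_tmul, map_add, hx, hy, LinearMap.add_apply]

lemma cleftProd_tmul (hmul : AxMul k P C ψ) (hunit : AxPsiCUnit k C e ψC)
    (hcov : CovPhi k P C ψ ψC Φ) (x y : P) (b c : C) :
    cleftProd k P C ψ ψC Φ Φi ((x ⊗ₜ b) ⊗ₜ (y ⊗ₜ c)) =
      x • ThetaInv k P C ψ e Φi (Φ b * y * Φ c) := by
  have hm := moveThrough12_eq hmul hcov
  rw [thetaInv_eq_unfoldR, mul_assoc, deltaR_mul hmul, deltaR_cov hcov hunit]
  simp only [cleftProd, LinearMap.comp_apply, LinearEquiv.coe_coe, map_tmul,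
    LinearMap.id_apply]
  generalize Δ k C b = w
  induction w using TensorProduct.induction_on with
  | zero => simp
  | tmul a b =>
    simp only [assoc_tmul, assoc_symm_tmul, map_tmul, LinearMap.id_apply, actR_tmul,
      mulPC_tmul, theta_tmul, unfoldR_smul, ← hm, mul_smul]
    congr 2
    generalize moveThrough12 k P C ψ ψC (b ⊗ₜ (y ⊗ₜ c)) = w
    induction w using TensorProduct.induction_on with
    | zero => simp
    | tmul v d => simp [mulPC_tmul, unfoldR_tmul]
    | add x y hx hy => simp only [map_add, hx, hy]
  | add x y hx hy =>
    simp only [add_tmul, tmul_add, map_add, hx, hy, LinearMap.add_apply, smul_add]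

lemma one_mem_Msub (hone : AxOne k P C ψ) : (1 : P) ∈ Msub k P C ψ e := hone e

lemma proj_one (hone : AxOne k P C ψ) (he : IsGrouplike k C e) (hconv : ConvInv k P C Φ Φi)
    (hΦe : Φ e = 1) : proj ψ e Φi 1 = 1 := by
  have h1 := LinearMap.congr_fun hconv.1 e
  simp only [LinearMap.comp_apply, he.1, he.2, map_tmul, LinearMap.mul'_apply, hΦe, one_mul,
    Algebra.linearMap_apply, map_one] at h1
  simp [proj, deltaR_apply, hone e, theta_tmul, h1]

lemma proj_cov (hunit : AxPsiCUnit k C e ψC) (hconv : ConvInv k P C Φ Φi)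
    (hcov : CovPhi k P C ψ ψC Φ) (c : C) : proj ψ e Φi (Φ c) = ε k C c • (1 : P) := by
  rw [proj, LinearMap.comp_apply, deltaR_cov hcov hunit, ← Algebra.algebraMap_eq_smul_one]
  refine Eq.trans ?_ (LinearMap.congr_fun hconv.1 c)
  simp only [Theta, LinearMap.comp_apply]
  rw [← LinearMap.comp_apply (map _ _) (map _ _), ← map_comp, LinearMap.id_comp,
    LinearMap.comp_id]

lemma isCrossedData (hdata : IsEntwiningData k P C ψ e ψC) (hconv : ConvInv k P C Φ Φi)
    (hΦe : Φ e = 1) (hcov : CovPhi k P C ψ ψC Φ) :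
    IsCrossedData k P C ψ e ψC (rhoPhi k P C ψ Φ Φi) (sigmaPhi k P C ψC Φ Φi) := by
  have hmul := hdata.1.1
  have hone := hdata.1.2.1
  have hunit := hdata.2.2.2.2
  have hθ := theta_thetaInv (Φi := Φi) hdata.1.2.2.2 hdata.2.1.2 hconv
  refine ⟨⟨fun x hx => ?_, fun c => ?_⟩, fun c x _ => ?_, fun c x y _ _ => ?_,
    fun b c => ?_, fun c => ?_, fun c => ?_⟩
  · rw [rhoPhi_eq hmul hunit hcov, hΦe, one_mul, ← mul_one x, proj_mul_of_mem hmul hx,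
      proj_one hone hdata.2.1 hconv hΦe]
  · rw [rhoPhi_eq hmul hunit hcov, mul_one, proj_cov hunit hconv hcov]
  · rw [rhat_rhoPhi hdata hcov]
    exact thetaInv_mem hdata hconv hcov _
  · simp only [BmapIII, LinearMap.comp_apply, LinearEquiv.coe_coe, assoc_symm_tmul, map_tmul,
      LinearMap.id_apply, rhat_rhoPhi hdata hcov]
    rw [mulPC_rhat_rhoPhi hdata hcov (thetaInv_mem hdata hconv hcov _), hθ, mul_assoc]
  · rw [sigmaPhi_eq hcov, rhoPhi_eq hmul hunit hcov]
    exact proj_mem hdata hconv hcov _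
  · rw [sigmaPhi_eq hcov, rhoPhi_eq hmul hunit hcov, hΦe, one_mul, proj_cov hunit hconv hcov]
  · rw [shat_sigmaPhi hcov, rhat_rhoPhi hdata hcov, hΦe, mul_one]
    have h1 := thetaInv_theta hmul hunit hconv hcov
      (w := 1 ⊗ₜ c) ⟨⟨1, one_mem_Msub hone⟩ ⊗ₜ c, by simp⟩
    rwa [theta_tmul, one_mul] at h1

end Aux

/-- (Example 2.3) A convolution invertible `Φ` with `Φ(e) = 1`
intertwining `ψ` and `ψ^C` yields crossed product data
`ρ(c⊗u) = Φ(c₍₁₎)u_αΦ⁻¹(c₍₂₎^α)`, `σ(b⊗c) = Φ(b₍₁₎)Φ(c_A)Φ⁻¹(b₍₂₎^A)`; the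
resulting crossed product `M ×_Φ C` has the explicit product (2.18), is
associative, and is isomorphic to `P` via `Θ(x ⊗ c) = xΦ(c)`. -/
theorem cleft_extension
    (hdata : IsEntwiningData k P C ψ e ψC)
    (hconv : ConvInv k P C Φ Φi)
    (hΦe : Φ e = 1)
    (hcov : CovPhi k P C ψ ψC Φ) :
    IsCrossedData k P C ψ e ψC (rhoPhi k P C ψ Φ Φi) (sigmaPhi k P C ψC Φ Φi) ∧
    (∀ x y : P, x ∈ Msub k P C ψ e → y ∈ Msub k P C ψ e → ∀ b c : C,
      prodX k P C ψ ψC (rhoPhi k P C ψ Φ Φi) (sigmaPhi k P C ψC Φ Φi)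
          ((x ⊗ₜ b) ⊗ₜ (y ⊗ₜ c)) =
        cleftProd k P C ψ ψC Φ Φi ((x ⊗ₜ b) ⊗ₜ (y ⊗ₜ c))) ∧
    (∀ u ∈ MCsub k P C ψ e, ∀ v ∈ MCsub k P C ψ e, ∀ w ∈ MCsub k P C ψ e,
      prodX k P C ψ ψC (rhoPhi k P C ψ Φ Φi) (sigmaPhi k P C ψC Φ Φi)
          (prodX k P C ψ ψC (rhoPhi k P C ψ Φ Φi) (sigmaPhi k P C ψC Φ Φi)
            (u ⊗ₜ v) ⊗ₜ w) =
        prodX k P C ψ ψC (rhoPhi k P C ψ Φ Φi) (sigmaPhi k P C ψC Φ Φi)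
          (u ⊗ₜ prodX k P C ψ ψC (rhoPhi k P C ψ Φ Φi) (sigmaPhi k P C ψC Φ Φi)
            (v ⊗ₜ w))) ∧
    (∀ u ∈ MCsub k P C ψ e, ∀ v ∈ MCsub k P C ψ e,
      Theta k P C Φ
          (prodX k P C ψ ψC (rhoPhi k P C ψ Φ Φi) (sigmaPhi k P C ψC Φ Φi)
            (u ⊗ₜ v)) =
        Theta k P C Φ u * Theta k P C Φ v) ∧
    (∀ u : P, Theta k P C Φ (ThetaInv k P C ψ e Φi u) = u) ∧
    (∀ w ∈ MCsub k P C ψ e, ThetaInv k P C ψ e Φi (Theta k P C Φ w) = w) := by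
  have hmem := thetaInv_mem hdata hconv hcov
  have hθ := theta_thetaInv (Φi := Φi) hdata.1.2.2.2 hdata.2.1.2 hconv
  refine ⟨isCrossedData hdata hconv hΦe hcov, fun x y _ _ b c => ?_,
    fun u hu v hv w _ => ?_, fun u hu v _ => ?_, hθ,
    fun w hw => thetaInv_theta hdata.1.1 hdata.2.2.2.2 hconv hcov hw⟩
  · rw [prodX_tmul hdata hconv hcov, cleftProd_tmul hdata.1.1 hdata.2.2.2.2 hcov]
  · rw [prodX_eq hdata hconv hcov hu, prodX_eq hdata hconv hcov (hmem _),
      prodX_eq hdata hconv hcov hv, prodX_eq hdata hconv hcov hu, hθ, hθ, mul_assoc]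
  · rw [prodX_eq hdata hconv hcov hu, hθ]

end Stmt12

end Entwine
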